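/- For every linearly independent (LI) ensemble (p_i, ρ_i)_{i=1}^m on ℂ^n there exists an LI ensemble (q_i, σ_i)_{i=1}^m with the column space of σ_i equal to the column space of ρ_i for every i, such that the pretty good measurement of (q_i, σ_i) is an optimal POVM for the minimum error discrimination of (p_i, ρ_i). -/

import Mathlib

open Matrix
open scoped ComplexOrder

noncomputable section

/-- Rank-one outer product `x x*` as an `n × n` complex matrix. -/
def outer {n : ℕ} (x : Fin n → ℂ) : Matrix (Fin n) (Fin n) ℂ :=
  Matrix.vecMulVec x (star x)

/-- A POVM indexed by `ι`: positive semidefinite elements summing to the identity. -/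
def IsPOVM {ι : Type} [Fintype ι] {n : ℕ} (E : ι → Matrix (Fin n) (Fin n) ℂ) : Prop :=
  (∀ i, (E i).PosSemidef) ∧ ∑ i, E i = 1

/-- Success probability of the POVM `E` for the ensemble `(p, ρ)`. -/
def succProb {ι : Type} [Fintype ι] {n : ℕ} (p : ι → ℝ)
    (ρ E : ι → Matrix (Fin n) (Fin n) ℂ) : ℝ :=
  ∑ i, p i * ((ρ i * E i).trace).re

/-- `P` is a POVM maximizing the success probability for the ensemble `(p, ρ)`. -/
def IsOptimal {ι : Type} [Fintype ι] {n : ℕ} (p : ι → ℝ)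
    (ρ P : ι → Matrix (Fin n) (Fin n) ℂ) : Prop :=
  IsPOVM P ∧ ∀ E, IsPOVM E → succProb p ρ E ≤ succProb p ρ P

/-- An ensemble of states: positive probabilities summing to 1, states positive
semidefinite of trace 1. -/
def IsEnsemble {ι : Type} [Fintype ι] {n : ℕ} (p : ι → ℝ)
    (ρ : ι → Matrix (Fin n) (Fin n) ℂ) : Prop :=
  (∀ i, 0 < p i) ∧ ∑ i, p i = 1 ∧ (∀ i, (ρ i).PosSemidef) ∧ ∀ i, (ρ i).trace = 1

/-- A linearly independent (LI) ensemble: the ranks sum to `n` and the column spaces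
of the states together span `ℂ^n`. -/
def IsLIEnsemble {ι : Type} [Fintype ι] {n : ℕ} (p : ι → ℝ)
    (ρ : ι → Matrix (Fin n) (Fin n) ℂ) : Prop :=
  IsEnsemble p ρ ∧ (∑ i, (ρ i).rank = n) ∧
    (⨆ i, LinearMap.range (ρ i).mulVecLin) = ⊤

/-- A projective measurement: mutually orthogonal Hermitian idempotents summing to
the identity. -/
def IsProjectiveMeasurement {ι : Type} [Fintype ι] {n : ℕ}
    (P : ι → Matrix (Fin n) (Fin n) ℂ) : Prop :=
  (∀ i j, i ≠ j → P i * P j = 0) ∧ (∀ i, P i * P i = P i) ∧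
    (∀ i, (P i).IsHermitian) ∧ ∑ i, P i = 1

/-- The pretty good measurement of the ensemble `(q, σ)` (with elements
`S^{-1/2} qᵢσᵢ S^{-1/2}`, `S = ∑ qⱼσⱼ`, `S^{1/2}` the unique positive definite square
root of `S`) is an optimal POVM for the minimum error discrimination of `(p, ρ)`. -/
def PGMIsOptimal {m n : ℕ} (q : Fin m → ℝ) (σ : Fin m → Matrix (Fin n) (Fin n) ℂ)
    (p : Fin m → ℝ) (ρ : Fin m → Matrix (Fin n) (Fin n) ℂ) : Prop :=
  ∀ R : Matrix (Fin n) (Fin n) ℂ, R.PosDef → R * R = ∑ j, (q j : ℂ) • σ j →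
    IsOptimal p ρ (fun i => R⁻¹ * ((q i : ℂ) • σ i) * R⁻¹)

theorem aux_psd_factor {n : ℕ} {A : Matrix (Fin n) (Fin n) ℂ} (hA : A.PosSemidef) :
    ∃ B : Matrix (Fin n) (Fin n) ℂ, A = Bᴴ * B := by
  open scoped MatrixOrder in
  exact CStarAlgebra.nonneg_iff_eq_star_mul_self.mp hA.nonneg

theorem aux_sqrt_unique {n : ℕ} {A B : Matrix (Fin n) (Fin n) ℂ} (hA : A.PosSemidef)
    (hB : B.PosSemidef) (h : A * A = B * B) : A = B := by
  open scoped MatrixOrder in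
  have h1 := CFC.sqrt_unique h hA.nonneg
  have h2 := CFC.sqrt_unique (rfl : B * B = B * B) hB.nonneg
  exact h1.symm.trans h2

theorem aux_exists_max {m n : ℕ} (p : Fin m → ℝ) (ρ : Fin m → Matrix (Fin n) (Fin n) ℂ)
    (hm : 0 < m) : ∃ P, IsOptimal p ρ P := by
  classical
  let S : Set (Fin m → Fin n → Fin n → ℂ) :=
    {A | ∑ i, (Matrix.of (A i))ᴴ * Matrix.of (A i) = 1}
  have hcl : IsClosed S := by
    apply isClosed_eq _ continuous_const
    apply continuous_finsetSum
    intro i _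
    have h : Continuous fun a : Fin m → Fin n → Fin n → ℂ => Matrix.of (a i) :=
      continuous_apply i
    exact (h.matrix_conjTranspose).matrix_mul h
  have hbd : S ⊆ Metric.closedBall 0 1 := by
    intro A hA
    rw [mem_closedBall_zero_iff]
    refine (pi_norm_le_iff_of_nonneg zero_le_one).2 fun i => ?_
    refine (pi_norm_le_iff_of_nonneg zero_le_one).2 fun a => ?_
    refine (pi_norm_le_iff_of_nonneg zero_le_one).2 fun b => ?_
    have h1 : (∑ i, (Matrix.of (A i))ᴴ * Matrix.of (A i)) b b = 1 := by
      rw [show _ = _ from hA]; simp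
    have h2 : ∑ i, ∑ a, ‖A i a b‖ ^ 2 = 1 := by
      have := congrArg Complex.re h1
      rw [Matrix.sum_apply] at this
      simp only [Matrix.mul_apply, Matrix.conjTranspose_apply, Matrix.of_apply, Complex.re_sum,
        Complex.one_re] at this
      rw [← this]
      refine Finset.sum_congr rfl fun i _ => Finset.sum_congr rfl fun a _ => ?_
      rw [Complex.star_def, ← Complex.normSq_eq_conj_mul_self, Complex.ofReal_re,
        Complex.normSq_eq_norm_sq]
    have h3 : ‖A i a b‖ ^ 2 ≤ 1 := by
      rw [← h2]
      refine le_trans ?_ (Finset.single_le_sum (f := fun i => ∑ a, ‖A i a b‖ ^ 2)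
        (fun i _ => Finset.sum_nonneg fun a _ => sq_nonneg _) (Finset.mem_univ i))
      exact Finset.single_le_sum (f := fun a => ‖A i a b‖ ^ 2)
        (fun a _ => sq_nonneg _) (Finset.mem_univ a)
    nlinarith [norm_nonneg (A i a b)]
  have hcpt : IsCompact S := (isCompact_closedBall 0 1).of_isClosed_subset hcl hbd
  have hne : S.Nonempty := by
    refine ⟨fun i => if i = ⟨0, hm⟩ then (1 : Matrix (Fin n) (Fin n) ℂ) else 0, ?_⟩
    change ∑ i, _ = _
    rw [Finset.sum_eq_single ⟨0, hm⟩]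
    · have : Matrix.of (1 : Matrix (Fin n) (Fin n) ℂ) = 1 := rfl
      simp [this]
    · intro b _ hb
      simp [hb]
    · simp
  have hcont : Continuous fun A : Fin m → Fin n → Fin n → ℂ =>
      succProb p ρ (fun i => (Matrix.of (A i))ᴴ * Matrix.of (A i)) := by
    unfold succProb
    apply continuous_finsetSum
    intro i _
    have h : Continuous fun a : Fin m → Fin n → Fin n → ℂ => Matrix.of (a i) :=
      continuous_apply i
    exact continuous_const.mul (Complex.continuous_re.comp
      (continuous_const.matrix_mul ((h.matrix_conjTranspose).matrix_mul h)).matrix_trace)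
  obtain ⟨A, hA, hmax⟩ := hcpt.exists_isMaxOn hne hcont.continuousOn
  refine ⟨fun i => (Matrix.of (A i))ᴴ * Matrix.of (A i),
    ⟨fun i => posSemidef_conjTranspose_mul_self _, hA⟩, fun E hE => ?_⟩
  choose B hB using fun i => aux_psd_factor (hE.1 i)
  have hBS : (fun i => (B i : Fin n → Fin n → ℂ)) ∈ S := by
    change ∑ i, (B i)ᴴ * B i = 1
    rw [← hE.2]
    exact Finset.sum_congr rfl fun i _ => (hB i).symm
  have := hmax hBS
  have e : E = fun i => (B i)ᴴ * B i := funext hB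
  rw [e]
  exact this

theorem aux_quad {a b s : ℝ} (h : ∀ ε : ℝ, 0 < ε → ε * s ≤ 2 → ε * a + ε ^ 2 * b ≤ 0) :
    a ≤ 0 := by
  by_contra! ha
  let ε : ℝ := min (1 / (|s| + 1)) (a / (2 * (|b| + 1)))
  have hs := abs_nonneg s
  have hb := abs_nonneg b
  have hε : 0 < ε := by positivity
  have h1 : ε * (|s| + 1) ≤ 1 := by
    rw [← le_div_iff₀ (by positivity)]; exact min_le_left _ _
  have h2 : ε * (2 * (|b| + 1)) ≤ a := by
    rw [← le_div_iff₀ (by positivity)]; exact min_le_right _ _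
  have h3 := h ε hε (by nlinarith [le_abs_self s])
  have h4 : a + ε * b ≤ 0 := by
    by_contra! h5
    nlinarith [mul_pos hε h5]
  nlinarith [neg_abs_le b]

theorem aux_succProb {m n : ℕ} (p : Fin m → ℝ) (ρ E : Fin m → Matrix (Fin n) (Fin n) ℂ) :
    succProb p ρ E = ∑ i, ((((p i : ℂ) • ρ i) * E i).trace).re := by
  unfold succProb
  refine Finset.sum_congr rfl fun i _ => ?_
  simp [Matrix.trace_smul]

theorem aux_variation {m n : ℕ} (p : Fin m → ℝ) (ρ P : Fin m → Matrix (Fin n) (Fin n) ℂ)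
    (hW : ∀ i, ((p i : ℂ) • ρ i).PosSemidef) (hP : IsOptimal p ρ P) (j : Fin m) :
    ((∑ i, ((p i : ℂ) • ρ i) * P i) + (∑ i, ((p i : ℂ) • ρ i) * P i)ᴴ
      - (2 : ℂ) • ((p j : ℂ) • ρ j)).PosSemidef := by
  classical
  obtain ⟨hPOVM, hopt⟩ := hP
  simp only [aux_succProb] at hopt
  generalize hWdef : (fun i => (p i : ℂ) • ρ i) = W at *
  have hWi : ∀ i, (p i : ℂ) • ρ i = W i := fun i => congrFun hWdef i
  simp only [hWi] at *
  have hKH : (∑ i, W i * P i)ᴴ = ∑ i, P i * W i := by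
    rw [Matrix.conjTranspose_sum]
    refine Finset.sum_congr rfl fun i _ => ?_
    rw [Matrix.conjTranspose_mul, (hPOVM.1 i).1.eq, (hW i).1.eq]
  set K := ∑ i, W i * P i with hK
  have hG : (K + Kᴴ - (2 : ℂ) • W j).IsHermitian := by
    unfold Matrix.IsHermitian
    simp [(hW j).1.eq, add_comm]
  refine PosSemidef.of_dotProduct_mulVec_nonneg hG fun v => ?_
  have him : (star v ⬝ᵥ ((K + Kᴴ - (2 : ℂ) • W j) *ᵥ v)).im = 0 :=
    hG.im_star_dotProduct_mulVec_self v
  have htr : ∀ M : Matrix (Fin n) (Fin n) ℂ,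
      star v ⬝ᵥ (M *ᵥ v) = (M * vecMulVec v (star v)).trace := by
    intro M
    rw [mul_vecMulVec, trace_vecMulVec, dotProduct_comm]
  rw [Complex.nonneg_iff]
  refine ⟨?_, him.symm⟩
  rw [htr]
  set V := vecMulVec v (star v) with hV
  have hVpsd : V.PosSemidef := posSemidef_vecMulVec_self_star v
  obtain ⟨s, hs⟩ : ∃ s : ℝ, star v ⬝ᵥ v = (s : ℂ) := by
    refine ⟨(star v ⬝ᵥ v).re, ?_⟩
    have := dotProduct_star_self_nonneg v
    rw [Complex.nonneg_iff] at this
    apply Complex.ext <;> simp [← this.2]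
  have hVV : V * V = (s : ℂ) • V := by
    rw [hV, vecMulVec_mul_vecMulVec, hs, vecMulVec_smul]
  have key : -(((K + Kᴴ - (2 : ℂ) • W j) * V).trace).re ≤ 0 := by
    refine aux_quad (b := (∑ i, ((W i * (V * P i * V)).trace).re) - s * ((W j * V).trace).re)
      (s := s) fun ε hε hεs => ?_
    let E : Fin m → Matrix (Fin n) (Fin n) ℂ := fun i =>
      (1 - (ε : ℂ) • V)ᴴ * P i * (1 - (ε : ℂ) • V) +
        if i = j then ((2 * ε - ε ^ 2 * s : ℝ) : ℂ) • V else 0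
    have hT : (1 - (ε : ℂ) • V)ᴴ = 1 - (ε : ℂ) • V := by
      simp [hVpsd.1.eq]
    have hE : IsPOVM E := by
      constructor
      · intro i
        refine ((hPOVM.1 i).conjTranspose_mul_mul_same _).add ?_
        split_ifs
        · apply hVpsd.smul
          rw [Complex.zero_le_real]
          nlinarith
        · exact PosSemidef.zero
      · simp only [E, Finset.sum_add_distrib, Finset.sum_ite_eq', Finset.mem_univ, if_true]
        rw [← Finset.sum_mul, ← Finset.mul_sum, hPOVM.2, hT]
        simp only [mul_one, mul_sub, sub_mul, one_mul, smul_mul_assoc, mul_smul_comm, hVV]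
        push_cast
        module
    have h1 := hopt E hE
    have h2 : ∀ i, ((W i * E i).trace).re = ((W i * P i).trace).re
        - ε * (((P i * W i) * V).trace).re - ε * (((W i * P i) * V).trace).re
        + ε ^ 2 * ((W i * (V * P i * V)).trace).re
        + if i = j then (2 * ε - ε ^ 2 * s) * ((W j * V).trace).re else 0 := by
      intro i
      have e1 : E i = P i - (ε : ℂ) • (V * P i) - (ε : ℂ) • (P i * V)
          + ((ε ^ 2 : ℝ) : ℂ) • (V * P i * V)
          + if i = j then ((2 * ε - ε ^ 2 * s : ℝ) : ℂ) • V else 0 := by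
        simp only [E, hT]
        congr 1
        simp only [mul_one, mul_sub, sub_mul, one_mul, smul_mul_assoc, mul_smul_comm, mul_assoc]
        push_cast
        module
      have e2 : (W i * V * P i).trace = ((P i * W i) * V).trace := by
        rw [trace_mul_comm, ← mul_assoc]
      rw [e1]
      split_ifs with hij
      · subst hij
        simp only [mul_add, mul_sub, mul_smul_comm, trace_add, trace_sub, trace_smul,
          Complex.add_re, Complex.sub_re, smul_eq_mul, Complex.re_ofReal_mul, e2, ← mul_assoc]
      · simp only [mul_add, mul_sub, mul_smul_comm, trace_add, trace_sub, trace_smul,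
          Complex.add_re, Complex.sub_re, smul_eq_mul, Complex.re_ofReal_mul, e2, ← mul_assoc,
          mul_zero, trace_zero, Complex.zero_re]
    have h3 : ((K * V).trace).re = ∑ i, (((W i * P i) * V).trace).re := by
      rw [hK, Finset.sum_mul, trace_sum, Complex.re_sum]
    have h4 : ((Kᴴ * V).trace).re = ∑ i, (((P i * W i) * V).trace).re := by
      rw [hKH, Finset.sum_mul, trace_sum, Complex.re_sum]
    simp only [h2, Finset.sum_add_distrib, Finset.sum_sub_distrib, ← Finset.mul_sum,
      Finset.sum_ite_eq', Finset.mem_univ, if_true] at h1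
    rw [← h3, ← h4] at h1
    have h5 : (((K + Kᴴ - (2 : ℂ) • W j) * V).trace).re =
        ((K * V).trace).re + ((Kᴴ * V).trace).re - 2 * ((W j * V).trace).re := by
      simp [add_mul, sub_mul, trace_add, trace_sub, trace_smul]
    rw [h5]
    linarith
  linarith

theorem aux_kkt {m n : ℕ} (p : Fin m → ℝ) (ρ P : Fin m → Matrix (Fin n) (Fin n) ℂ)
    (hW : ∀ i, ((p i : ℂ) • ρ i).PosSemidef) (hP : IsOptimal p ρ P) :
    ∃ K : Matrix (Fin n) (Fin n) ℂ, (∀ j, (K - (p j : ℂ) • ρ j).PosSemidef) ∧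
      (∀ j, K * P j = ((p j : ℂ) • ρ j) * P j) := by
  have hvar := aux_variation p ρ P hW hP
  have hPOVM := hP.1
  generalize hWdef : (fun i => (p i : ℂ) • ρ i) = W at *
  have hWi : ∀ i, (p i : ℂ) • ρ i = W i := fun i => congrFun hWdef i
  simp only [hWi] at *
  set K := ∑ i, W i * P i with hK
  have hKH : Kᴴ = ∑ i, P i * W i := by
    rw [hK, Matrix.conjTranspose_sum]
    refine Finset.sum_congr rfl fun i _ => ?_
    rw [Matrix.conjTranspose_mul, (hPOVM.1 i).1.eq, (hW i).1.eq]
  have hnn : ∀ j, 0 ≤ ((K + Kᴴ - (2 : ℂ) • W j) * P j).trace ∧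
      (((K + Kᴴ - (2 : ℂ) • W j) * P j).trace = 0 →
        (K + Kᴴ - (2 : ℂ) • W j) * P j = 0) := by
    intro j
    obtain ⟨B, hB⟩ := aux_psd_factor (hvar j)
    obtain ⟨A, hA⟩ := aux_psd_factor (hPOVM.1 j)
    rw [hB, hA]
    have e : (Bᴴ * B * (Aᴴ * A)).trace = ((B * Aᴴ)ᴴ * (B * Aᴴ)).trace := by
      rw [← mul_assoc, trace_mul_comm]
      simp [mul_assoc]
    rw [e]
    refine ⟨(posSemidef_conjTranspose_mul_self _).trace_nonneg, fun h => ?_⟩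
    rw [trace_conjTranspose_mul_self_eq_zero_iff] at h
    calc Bᴴ * B * (Aᴴ * A) = Bᴴ * (B * Aᴴ) * A := by simp only [mul_assoc]
      _ = 0 := by rw [h]; simp
  have hsum : ∑ j, ((K + Kᴴ - (2 : ℂ) • W j) * P j).trace = 0 := by
    have h1 : ∑ j, (K + Kᴴ - (2 : ℂ) • W j) * P j = Kᴴ - K := by
      simp only [sub_mul, Finset.sum_sub_distrib, ← Finset.mul_sum, hPOVM.2, smul_mul_assoc,
        ← Finset.smul_sum, ← hK]
      simp only [mul_one]
      module
    have h2 : Kᴴ.trace = K.trace := by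
      rw [hKH, hK, trace_sum, trace_sum]
      exact Finset.sum_congr rfl fun i _ => trace_mul_comm _ _
    rw [← trace_sum, h1, trace_sub, h2, sub_self]
  have hz := (Finset.sum_eq_zero_iff_of_nonneg fun j _ => (hnn j).1).1 hsum
  have hz' : ∀ j, (K + Kᴴ - (2 : ℂ) • W j) * P j = 0 := fun j =>
    (hnn j).2 (hz j (Finset.mem_univ j))
  have hKK : Kᴴ = K := by
    have h1 : ∑ j, (K + Kᴴ - (2 : ℂ) • W j) * P j = Kᴴ - K := by
      simp only [sub_mul, Finset.sum_sub_distrib, ← Finset.mul_sum, hPOVM.2, smul_mul_assoc,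
        ← Finset.smul_sum, ← hK]
      simp only [mul_one]
      module
    rw [Finset.sum_eq_zero fun j _ => hz' j] at h1
    exact (sub_eq_zero.1 h1.symm)
  have h2 : ∀ j, K + Kᴴ - (2 : ℂ) • W j = (2 : ℂ) • (K - W j) := by
    intro j; rw [hKK]; module
  refine ⟨K, fun j => ?_, fun j => ?_⟩
  · have := (hvar j).smul (a := (1 / 2 : ℂ)) (by rw [Complex.nonneg_iff]; norm_num)
    rw [h2, smul_smul] at this
    norm_num at this
    exact this
  · have := hz' j
    rw [h2, smul_mul_assoc, smul_eq_zero] at this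
    have := this.resolve_left two_ne_zero
    rwa [sub_mul, sub_eq_zero] at this

theorem aux_rank_sum {m n : ℕ} (P : Fin m → Matrix (Fin n) (Fin n) ℂ) (s : Finset (Fin m)) :
    (∑ i ∈ s, P i).rank ≤ ∑ i ∈ s, (P i).rank := by
  classical
  induction s using Finset.induction_on with
  | empty => simp
  | insert a s ha ih =>
    rw [Finset.sum_insert ha, Finset.sum_insert ha]
    refine le_trans ?_ (Nat.add_le_add_left ih _)
    unfold Matrix.rank
    rw [Matrix.mulVecLin_add]
    exact (Submodule.finrank_mono (LinearMap.range_add_le _ _)).trans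
      (Submodule.finrank_add_le_finrank_add_finrank _ _)

/-- For every LI ensemble `(p, ρ)` there is an LI ensemble `(q, σ)`, with each `σᵢ`
having the same column space as `ρᵢ`, whose pretty good measurement is an optimal POVM
for the minimum error discrimination of `(p, ρ)`. -/
theorem stmt_15 {m n : ℕ} (p : Fin m → ℝ) (ρ : Fin m → Matrix (Fin n) (Fin n) ℂ)
    (hens : IsLIEnsemble p ρ) :
    ∃ (q : Fin m → ℝ) (σ : Fin m → Matrix (Fin n) (Fin n) ℂ),
      IsLIEnsemble q σ ∧
      (∀ i, LinearMap.range (σ i).mulVecLin = LinearMap.range (ρ i).mulVecLin) ∧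
      PGMIsOptimal q σ p ρ := by
  obtain ⟨⟨hp, hp1, hρ, hρ1⟩, hrank, hspan⟩ := hens
  have hm : 0 < m := by
    rcases Nat.eq_zero_or_pos m with rfl | h
    · simp at hp1
    · exact h
  have hW : ∀ i, ((p i : ℂ) • ρ i).PosSemidef := fun i =>
    (hρ i).smul (by rw [Complex.zero_le_real]; exact (hp i).le)
  obtain ⟨P, hP⟩ := aux_exists_max p ρ hm
  obtain ⟨K, hKW, hKP⟩ := aux_kkt p ρ P hW hP
  have hKpsd : K.PosSemidef := by
    have := (hKW ⟨0, hm⟩).add (hW ⟨0, hm⟩)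
    rwa [sub_add_cancel] at this
  -- `K` is positive definite
  have hK : K.PosDef := by
    refine PosDef.of_dotProduct_mulVec_pos hKpsd.1 fun x hx => ?_
    refine lt_of_le_of_ne (hKpsd.dotProduct_mulVec_nonneg x) fun h0 => hx ?_
    have hker : ∀ j, ρ j *ᵥ x = 0 := by
      intro j
      have h1 := (hKW j).dotProduct_mulVec_nonneg x
      rw [sub_mulVec, dotProduct_sub, ← h0, zero_sub] at h1
      have h2 := (hW j).dotProduct_mulVec_nonneg x
      have h3 := (hW j).dotProduct_mulVec_zero_iff x |>.1 (le_antisymm (neg_nonneg.1 h1) h2)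
      rw [smul_mulVec, smul_eq_zero] at h3
      exact h3.resolve_left (by exact_mod_cast (hp j).ne')
    have hle : (⨆ i, LinearMap.range (ρ i).mulVecLin) ≤
        LinearMap.ker (dotProductBilin ℂ ℂ (star x)) := by
      refine iSup_le fun j => ?_
      rintro _ ⟨y, rfl⟩
      rw [LinearMap.mem_ker]
      change star x ⬝ᵥ (ρ j *ᵥ y) = 0
      rw [dotProduct_mulVec]
      have : star x ᵥ* ρ j = star (ρ j *ᵥ x) := by
        rw [star_mulVec, (hρ j).1.eq]
      rw [this, hker j]
      simp
    rw [hspan] at hle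
    have : star x ⬝ᵥ x = 0 := hle (Submodule.mem_top (x := x))
    exact dotProduct_star_self_eq_zero.1 this
  have hKu : IsUnit K.det := (Matrix.isUnit_iff_isUnit_det K).1 hK.isUnit
  have hfac : ∀ j, K * P j = ρ j * ((p j : ℂ) • P j) := fun j => by
    rw [hKP, smul_mul_assoc, mul_smul_comm]
  have hle : ∀ j, LinearMap.range (K * P j).mulVecLin ≤ LinearMap.range (ρ j).mulVecLin := by
    intro j
    rw [hfac, Matrix.mulVecLin_mul]
    exact LinearMap.range_comp_le_range _ _
  have hrk : ∀ j, (K * P j).rank = (P j).rank := fun j =>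
    rank_mul_eq_right_of_isUnit_det _ _ hKu
  have hrle : ∀ j, (P j).rank ≤ (ρ j).rank := fun j => by
    rw [← hrk j]
    exact Submodule.finrank_mono (hle j)
  have hreq : ∀ j, (P j).rank = (ρ j).rank := by
    have h1 : n ≤ ∑ j, (P j).rank := by
      have := aux_rank_sum P Finset.univ
      rw [hP.1.2, rank_one, Fintype.card_fin] at this
      exact this
    have h2 : ∑ j, (P j).rank = ∑ j, (ρ j).rank :=
      le_antisymm (Finset.sum_le_sum fun j _ => hrle j) (by rw [hrank]; exact h1)
    intro j
    exact (Finset.sum_eq_sum_iff_of_le fun j _ => hrle j).1 h2 j (Finset.mem_univ j)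
  have hrange : ∀ j, LinearMap.range (K * P j * K).mulVecLin =
      LinearMap.range (ρ j).mulVecLin := by
    intro j
    refine Submodule.eq_of_le_of_finrank_eq ?_ ?_
    · refine le_trans ?_ (hle j)
      rw [Matrix.mulVecLin_mul]
      exact LinearMap.range_comp_le_range _ _
    · change (K * P j * K).rank = (ρ j).rank
      rw [rank_mul_eq_left_of_isUnit_det _ _ hKu, hrk, hreq]
  have hTpsd : ∀ j, (K * P j * K).PosSemidef := fun j => by
    have := (hP.1.1 j).conjTranspose_mul_mul_same K
    rwa [hKpsd.1.eq] at this
  have hTne : ∀ j, K * P j * K ≠ 0 := by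
    intro j h
    have h1 := hrange j
    rw [h, Matrix.mulVecLin_zero, LinearMap.range_zero, eq_comm, LinearMap.range_eq_bot] at h1
    have h2 : ρ j = 0 := by
      refine Matrix.toLin'.injective ?_
      rw [map_zero]
      exact h1
    have h3 := hρ1 j
    rw [h2] at h3
    simp at h3
  choose t ht using fun j => (show ∃ t : ℝ, (K * P j * K).trace = (t : ℂ) ∧ 0 < t by
    have h1 := (hTpsd j).trace_nonneg
    have h2 : (K * P j * K).trace ≠ 0 := fun h => hTne j ((hTpsd j).trace_eq_zero_iff.1 h)
    have h3 := lt_of_le_of_ne h1 h2.symm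
    rw [Complex.lt_def] at h3
    refine ⟨(K * P j * K).trace.re, ?_, h3.1⟩
    apply Complex.ext
    · simp
    · simpa using h3.2.symm)
  have hTpos : 0 < ∑ j, t j := by
    have : Nonempty (Fin m) := ⟨⟨0, hm⟩⟩
    exact Finset.sum_pos (fun j _ => (ht j).2) Finset.univ_nonempty
  set T := ∑ j, t j with hT
  have hrange' : ∀ j, LinearMap.range (((t j : ℂ)⁻¹) • (K * P j * K)).mulVecLin =
      LinearMap.range (ρ j).mulVecLin := by
    intro j
    have e : (((t j : ℂ)⁻¹) • (K * P j * K)).mulVecLin =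
        ((t j : ℂ)⁻¹) • (K * P j * K).mulVecLin := by
      ext1 x
      ext1
      simp [smul_mulVec]
    rw [← hrange j, e, LinearMap.range_smul]
    exact inv_ne_zero (by exact_mod_cast (ht j).2.ne')
  refine ⟨fun j => t j / T, fun j => ((t j : ℂ)⁻¹) • (K * P j * K),
    ⟨⟨fun j => div_pos (ht j).2 hTpos, ?_, fun j => ?_, fun j => ?_⟩, ?_, ?_⟩, hrange', ?_⟩
  · rw [← Finset.sum_div, ← hT, div_self hTpos.ne']
  · refine (hTpsd j).smul ?_
    rw [← Complex.ofReal_inv, Complex.zero_le_real]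
    exact (inv_pos.2 (ht j).2).le
  · rw [trace_smul, (ht j).1, smul_eq_mul]
    exact inv_mul_cancel₀ (by exact_mod_cast (ht j).2.ne')
  · refine Eq.trans ?_ hrank
    refine Finset.sum_congr rfl fun j _ => ?_
    unfold Matrix.rank
    rw [hrange' j]
  · rw [← hspan]
    exact iSup_congr hrange'
  · intro R hR hRR
    have hq : ∀ j, ((t j / T : ℝ) : ℂ) • ((t j : ℂ)⁻¹) • (K * P j * K) =
        ((T⁻¹ : ℝ) : ℂ) • (K * P j * K) := by
      intro j
      rw [smul_smul]
      congr 1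
      have h1 : (t j : ℂ) ≠ 0 := by exact_mod_cast (ht j).2.ne'
      have h2 : (T : ℂ) ≠ 0 := by exact_mod_cast hTpos.ne'
      push_cast
      field_simp
    simp only [hq] at hRR ⊢
    have hc : ((√(T⁻¹) : ℝ) : ℂ) * ((√(T⁻¹) : ℝ) : ℂ) = ((T⁻¹ : ℝ) : ℂ) := by
      rw [← Complex.ofReal_mul, Real.mul_self_sqrt (inv_pos.2 hTpos).le]
    have hRK : R = ((√(T⁻¹) : ℝ) : ℂ) • K := by
      refine aux_sqrt_unique hR.posSemidef (hKpsd.smul ?_) ?_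
      · rw [Complex.zero_le_real]; exact Real.sqrt_nonneg _
      · rw [hRR, ← Finset.smul_sum, ← Finset.sum_mul, ← Finset.mul_sum, hP.1.2, mul_one,
          smul_mul_smul_comm, hc]
    have hRu : IsUnit R.det := (Matrix.isUnit_iff_isUnit_det R).1 hR.isUnit
    have : (fun i => R⁻¹ * (((T⁻¹ : ℝ) : ℂ) • (K * P i * K)) * R⁻¹) = P := by
      funext i
      have h1 : ((T⁻¹ : ℝ) : ℂ) • (K * P i * K) = R * P i * R := by
        rw [hRK, smul_mul_assoc, smul_mul_smul_comm, hc]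
      rw [h1, mul_assoc R, nonsing_inv_mul_cancel_left _ _ hRu,
        mul_nonsing_inv_cancel_right _ _ hRu]
    rw [this]
    exact hP
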